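/- arXiv:math/0201089 — 6 statements merged into one kernel-verified Lean document; each statement's English description precedes it below -/
import Mathlib

section
/- Let A be an associative ring and let B : A × A → A be a biadditive operation satisfying the Leibniz rule in both arguments. Then for all A₁, A₂, B₁, B₂ ∈ A one has [A₁,B₁]·B(A₂,B₂) = B(A₁,B₁)·[A₂,B₂], where [a,b] = ab − ba is the commutator. -/
/-!
Expand `B (a₁ * a₂) (b₁ * b₂)` by the Leibniz rule, once in the first argument and then in the
second, and once in the opposite order. The mixed terms `a₁ * B a₂ b₁ * b₂` and
`b₁ * B a₁ b₂ * a₂` occur in both expansions; cancelling them leaves the commutator relation.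
-/

/-- A multiplicative biderivation: a binary operation, possibly not biadditive, that satisfies the
Leibniz rule in each argument. -/
structure IsBiLeibniz {A : Type*} [Mul A] [Add A] (B : A → A → A) : Prop where
  mul_left (a₁ a₂ b : A) : B (a₁ * a₂) b = a₁ * B a₂ b + B a₁ b * a₂
  mul_right (a b₁ b₂ : A) : B a (b₁ * b₂) = b₁ * B a b₂ + B a b₁ * b₂

namespace IsBiLeibniz

variable {A : Type*} [NonUnitalSemiring A] {B : A → A → A}

theorem mul_mul_left_first (hB : IsBiLeibniz B) (a₁ a₂ b₁ b₂ : A) :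
    B (a₁ * a₂) (b₁ * b₂) =
      (a₁ * b₁ * B a₂ b₂ + B a₁ b₁ * (b₂ * a₂)) +
        (a₁ * B a₂ b₁ * b₂ + b₁ * B a₁ b₂ * a₂) := by
  rw [hB.mul_left, hB.mul_right a₂, hB.mul_right a₁]
  simp only [mul_add, add_mul, mul_assoc]
  abel

theorem mul_mul_right_first (hB : IsBiLeibniz B) (a₁ a₂ b₁ b₂ : A) :
    B (a₁ * a₂) (b₁ * b₂) =
      (b₁ * a₁ * B a₂ b₂ + B a₁ b₁ * (a₂ * b₂)) +
        (a₁ * B a₂ b₁ * b₂ + b₁ * B a₁ b₂ * a₂) := by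
  rw [hB.mul_right, hB.mul_left a₁ a₂ b₂, hB.mul_left a₁ a₂ b₁]
  simp only [mul_add, add_mul, mul_assoc]
  abel

theorem mul_add_mul_eq_mul_add_mul [IsRightCancelAdd A] (hB : IsBiLeibniz B)
    (a₁ a₂ b₁ b₂ : A) :
    a₁ * b₁ * B a₂ b₂ + B a₁ b₁ * (b₂ * a₂) =
      b₁ * a₁ * B a₂ b₂ + B a₁ b₁ * (a₂ * b₂) :=
  add_right_cancel <|
    (hB.mul_mul_left_first a₁ a₂ b₁ b₂).symm.trans (hB.mul_mul_right_first a₁ a₂ b₁ b₂)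

end IsBiLeibniz

theorem leibniz_biadditive_commutator_relation_general
    {A : Type*} [NonUnitalRing A] {B : A → A → A} (hB : IsBiLeibniz B) (a₁ a₂ b₁ b₂ : A) :
    (a₁ * b₁ - b₁ * a₁) * B a₂ b₂ = B a₁ b₁ * (a₂ * b₂ - b₂ * a₂) := by
  rw [sub_mul, mul_sub, sub_eq_sub_iff_add_eq_add, add_comm (B a₁ b₁ * (a₂ * b₂))]
  exact hB.mul_add_mul_eq_mul_add_mul a₁ a₂ b₁ b₂

/-- **Proposition 1.** In an associative ring, any biadditive operation `B`
satisfying the Leibniz rule in both arguments satisfies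
`[A₁,B₁]·B(A₂,B₂) = B(A₁,B₁)·[A₂,B₂]`, where `[a,b] = a*b - b*a`. -/
theorem leibniz_biadditive_commutator_relation
    {A : Type*} [NonUnitalRing A] (B : A → A → A)
    (haddl : ∀ a b c : A, B (a + b) c = B a c + B b c)
    (haddr : ∀ a b c : A, B a (b + c) = B a b + B a c)
    (hleib_r : ∀ a b₁ b₂ : A, B a (b₁ * b₂) = b₁ * B a b₂ + B a b₁ * b₂)
    (hleib_l : ∀ a b₁ b₂ : A, B (b₁ * b₂) a = b₁ * B b₂ a + B b₁ a * b₂) :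
    ∀ A₁ A₂ B₁ B₂ : A,
      (A₁ * B₁ - B₁ * A₁) * B A₂ B₂ = B A₁ B₁ * (A₂ * B₂ - B₂ * A₂) :=
  leibniz_biadditive_commutator_relation_general
    ⟨fun b₁ b₂ a ↦ hleib_l a b₁ b₂, hleib_r⟩
end

section
/- Let A be a unital associative ring which is strongly non-commutative, i.e. the two-sided ideal of A generated by all commutators [a,b] = ab − ba equals A. If B : A × A → A is a biadditive operation satisfying the Leibniz rule in both arguments, then there exists a central element C ∈ A such that B(a,b) = C·(ab − ba) for all a, b ∈ A. -/
/-!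
Expanding `B(ac, bd)` in the two possible orders gives `⁅a, b⁆ B(c, d) = B(a, b) ⁅c, d⁆`, and
another use of the Leibniz rule inserts a factor: `⁅a, b⁆ z B(c, d) = B(a, b) z ⁅c, d⁆`.
If `1 = ∑ xᵢ ⁅aᵢ, bᵢ⁆ yᵢ`, then `C = ∑ xᵢ B(aᵢ, bᵢ) yᵢ` satisfies `z B(a, b) = C z ⁅a, b⁆` for
all `z`. Hence `(x C - C x) z ⁅a, b⁆ = x z B(a, b) - x z B(a, b) = 0` for all `z`, so `x C - C x` is
annihilated by `1`.
-/

open scoped RightActions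

/-- The two-sided ideal generated by all commutators. A ring `A` is strongly non-commutative when
`commutatorIdeal A = ⊤`. -/
def commutatorIdeal (A : Type*) [Ring A] : TwoSidedIdeal A :=
  TwoSidedIdeal.span {u | ∃ a b : A, ⁅a, b⁆ = u}

/-- The Leibniz rule in both arguments, for a bracket on a ring with values in a bimodule, the right
action being encoded as an action of the opposite ring. -/
structure IsLeibnizBracket {A M : Type*} [Mul A] [Add M] [SMul A M] [SMul Aᵐᵒᵖ M]
    (B : A → A → M) : Prop where
  apply_mul (a b c : A) : B a (b * c) = b •> B a c + B a b <• c
  mul_apply (a b c : A) : B (a * b) c = a •> B b c + B a c <• b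

theorem lie_mem_commutatorIdeal {A : Type*} [Ring A] (a b : A) : ⁅a, b⁆ ∈ commutatorIdeal A :=
  TwoSidedIdeal.subset_span ⟨a, b, rfl⟩

theorem op_smul_mul_eq_zero_of_mem_span {A M : Type*} [Ring A] [AddCommGroup M] [Module Aᵐᵒᵖ M]
    {s : Set A} {m : M} (hm : ∀ z, ∀ u ∈ s, m <• (z * u) = 0)
    {u : A} (hu : u ∈ TwoSidedIdeal.span s) (z : A) : m <• (z * u) = 0 := by
  induction hu using TwoSidedIdeal.span_induction generalizing z with
  | mem u hu => exact hm z u hu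
  | zero => rw [mul_zero, MulOpposite.op_zero, zero_smul]
  | add u v _ _ hu hv => rw [mul_add, MulOpposite.op_add, add_smul, hu, hv, add_zero]
  | neg u _ hu => rw [mul_neg, MulOpposite.op_neg, neg_smul, hu, neg_zero]
  | left_absorb x u _ hu => rw [← mul_assoc, hu]
  | right_absorb y u _ hu => rw [← mul_assoc, op_smul_mul, hu, smul_zero]

namespace IsLeibnizBracket

variable {A M : Type*} [Ring A] [AddCommGroup M] [Module A M] [Module Aᵐᵒᵖ M]
  [SMulCommClass A Aᵐᵒᵖ M] {B : A → A → M}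

theorem lie_smul_eq_op_smul_lie (hB : IsLeibnizBracket B) (a b c d : A) :
    ⁅a, b⁆ •> B c d = B a b <• ⁅c, d⁆ := by
  have hleft : B (a * c) (b * d) = (a * b) •> B c d + a •> (B c b <• d)
      + ((b •> B a d) <• c + B a b <• (d * c)) := by
    rw [hB.mul_apply, hB.apply_mul, hB.apply_mul, smul_add, smul_add, mul_smul, op_smul_mul]
  have hright : B (a * c) (b * d) = (b * a) •> B c d + (b •> B a d) <• c
      + (a •> (B c b <• d) + B a b <• (c * d)) := by
    rw [hB.apply_mul, hB.mul_apply, hB.mul_apply, smul_add, smul_add,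
      smul_comm b (MulOpposite.op c), smul_comm a (MulOpposite.op d), mul_smul, op_smul_mul]
  rw [Ring.lie_def, Ring.lie_def, sub_smul, MulOpposite.op_sub, sub_smul]
  linear_combination (norm := abel) hright - hleft

theorem lie_smul_smul_eq_op_smul_mul_lie (hB : IsLeibnizBracket B) (a b z c d : A) :
    ⁅a, b⁆ •> z •> B c d = B a b <• (z * ⁅c, d⁆) := by
  have hz : z •> B c d = B (z * c) d - B z d <• c := by rw [hB.mul_apply, add_sub_cancel_right]
  have hlie : z * ⁅c, d⁆ = ⁅z * c, d⁆ - ⁅z, d⁆ * c := by simp only [Ring.lie_def]; noncomm_ring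
  rw [hz, smul_sub, smul_comm, hB.lie_smul_eq_op_smul_lie, hB.lie_smul_eq_op_smul_lie, hlie,
    MulOpposite.op_sub, sub_smul, op_smul_mul]

theorem exists_mul_smul_eq_op_smul_mul_lie (hB : IsLeibnizBracket B) {u : A}
    (hu : u ∈ commutatorIdeal A) :
    ∃ c : M, ∀ z a b : A, (u * z) •> B a b = c <• (z * ⁅a, b⁆) := by
  induction hu using TwoSidedIdeal.span_induction with
  | mem u hu =>
    obtain ⟨a, b, rfl⟩ := hu
    exact ⟨B a b, fun z c d => by rw [mul_smul, hB.lie_smul_smul_eq_op_smul_mul_lie]⟩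
  | zero => exact ⟨0, fun z a b => by rw [zero_mul, zero_smul, smul_zero]⟩
  | add u v _ _ hu hv =>
    obtain ⟨c, hc⟩ := hu
    obtain ⟨d, hd⟩ := hv
    exact ⟨c + d, fun z a b => by rw [add_mul, add_smul, hc, hd, smul_add]⟩
  | neg u _ hu =>
    obtain ⟨c, hc⟩ := hu
    exact ⟨-c, fun z a b => by rw [neg_mul, neg_smul, hc, smul_neg]⟩
  | left_absorb x u _ hu =>
    obtain ⟨c, hc⟩ := hu
    exact ⟨x •> c, fun z a b => by rw [mul_assoc, mul_smul, hc, smul_comm]⟩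
  | right_absorb y u _ hu =>
    obtain ⟨c, hc⟩ := hu
    exact ⟨c <• y, fun z a b => by rw [mul_assoc, hc, mul_assoc, op_smul_mul]⟩

end IsLeibnizBracket

theorem leibniz_bracket_eq_central_mul_commutator_general {A M : Type*} [Ring A] [AddCommGroup M]
    [Module A M] [Module Aᵐᵒᵖ M] [SMulCommClass A Aᵐᵒᵖ M] (hA : commutatorIdeal A = ⊤)
    {B : A → A → M} (hB : IsLeibnizBracket B) :
    ∃ C : M, (∀ x : A, x •> C = C <• x) ∧ ∀ a b : A, B a b = C <• ⁅a, b⁆ := by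
  have one_mem : (1 : A) ∈ commutatorIdeal A := hA ▸ TwoSidedIdeal.mem_top A
  obtain ⟨C, hC⟩ := hB.exists_mul_smul_eq_op_smul_mul_lie one_mem
  simp only [one_mul] at hC
  refine ⟨C, fun x => ?_, fun a b => by simpa using hC 1 a b⟩
  have hannihilate (z a b : A) : (x •> C - C <• x) <• (z * ⁅a, b⁆) = 0 := by
    rw [smul_sub, sub_eq_zero]
    calc (x •> C) <• (z * ⁅a, b⁆) = x •> z •> B a b := by rw [← smul_comm, hC]
      _ = C <• x <• (z * ⁅a, b⁆) := by rw [smul_smul, hC, mul_assoc, op_smul_mul]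
  have hzero := op_smul_mul_eq_zero_of_mem_span (m := x •> C - C <• x)
    (by rintro z _ ⟨a, b, rfl⟩; exact hannihilate z a b) one_mem 1
  simpa only [mul_one, MulOpposite.op_one, one_smul, sub_eq_zero] using hzero

/-- **Theorem 1 (first part).** If `A` is a unital associative ring that is
strongly non-commutative (the two-sided ideal generated by all commutators is
all of `A`), then every biadditive operation satisfying the Leibniz rule in
both arguments is of the form `B(a,b) = C·(a*b - b*a)` for a central `C`. -/
theorem leibniz_bracket_eq_central_mul_commutator
    {A : Type*} [Ring A]
    (hSNC : ∀ I : TwoSidedIdeal A, (∀ a b : A, a * b - b * a ∈ I) → I = ⊤)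
    (B : A → A → A)
    (haddl : ∀ a b c : A, B (a + b) c = B a c + B b c)
    (haddr : ∀ a b c : A, B a (b + c) = B a b + B a c)
    (hleib_r : ∀ a b₁ b₂ : A, B a (b₁ * b₂) = b₁ * B a b₂ + B a b₁ * b₂)
    (hleib_l : ∀ a b₁ b₂ : A, B (b₁ * b₂) a = b₁ * B b₂ a + B b₁ a * b₂) :
    ∃ C : A, (∀ x : A, C * x = x * C) ∧ ∀ a b : A, B a b = C * (a * b - b * a) := by
  obtain ⟨C, hcentral, hC⟩ := leibniz_bracket_eq_central_mul_commutator_general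
    (hSNC _ lie_mem_commutatorIdeal) (B := B) ⟨hleib_r, fun a b c => hleib_l c a b⟩
  exact ⟨C, fun x => (hcentral x).symm, hC⟩
end

section
/- Let k be a commutative unital ring and A a unital associative k-algebra which is strongly non-commutative (the two-sided ideal generated by all commutators equals A) and whose center is trivial, i.e. every central element of A lies in k·1. Then for every k-bilinear operation B : A × A → A satisfying the Leibniz rule in both arguments there exists λ ∈ k such that B(a,b) = λ·(ab − ba) for all a, b ∈ A. -/
/-!
Expanding `B (a * c) (b * d)` by the Leibniz rule in the two possible orders gives
`⁅a, b⁆ * B c d = B a b * ⁅c, d⁆`, and replacing `c` by `x * c` inserts an arbitrary element: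
`⁅a, b⁆ * x * B c d = B a b * x * ⁅c, d⁆`. The elements `u` for which some `v` satisfies
`u * x * B c d = v * x * ⁅c, d⁆` for all `x`, `c`, `d` therefore form a two-sided ideal containing
all commutators. Strong non-commutativity puts `1` into this ideal, which yields `z` with
`x * B c d = z * x * ⁅c, d⁆`. Computing `x * y * B c d` from this in two ways gives
`⁅x, z⁆ * y * ⁅c, d⁆ = 0`; hence `⁅x, z⁆` annihilates the ideal generated by the commutators, which
contains `1`, and `z` is central.
-/

/-- A Leibniz bracket: an operation, not required to be additive, that satisfies the Leibniz rule
in each argument. -/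
structure IsLeibnizBracket_s3 {A : Type*} [Add A] [Mul A] (B : A → A → A) : Prop where
  mul_left : ∀ a b c, B (a * b) c = a * B b c + B a c * b
  mul_right : ∀ a b c, B a (b * c) = b * B a c + B a b * c

/-- A strongly non-commutative ring: its commutators generate the unit two-sided ideal. -/
def IsStronglyNoncommutative (A : Type*) [Ring A] : Prop :=
  TwoSidedIdeal.span (Set.range fun p : A × A => ⁅p.1, p.2⁆) = ⊤

namespace IsLeibnizBracket_s3

variable {A : Type*} [NonUnitalRing A] {B : A → A → A}

theorem commutator_mul_apply (hB : IsLeibnizBracket_s3 B) (a b c d : A) :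
    ⁅a, b⁆ * B c d = B a b * ⁅c, d⁆ := by
  have expand_left_first : B (a * c) (b * d) =
      a * (b * B c d + B c b * d) + (b * B a d + B a b * d) * c := by
    rw [hB.mul_left, hB.mul_right, hB.mul_right]
  have expand_right_first : B (a * c) (b * d) =
      b * (a * B c d + B a d * c) + (a * B c b + B a b * c) * d := by
    rw [hB.mul_right, hB.mul_left, hB.mul_left]
  have expansions_eq := expand_left_first.symm.trans expand_right_first
  rw [Ring.lie_def, Ring.lie_def]
  rw [← sub_eq_zero] at expansions_eq ⊢
  rw [← expansions_eq]
  noncomm_ring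

theorem commutator_mul_mul_apply (hB : IsLeibnizBracket_s3 B) (a b c d x : A) :
    ⁅a, b⁆ * x * B c d = B a b * x * ⁅c, d⁆ := by
  have leibniz_lie : ⁅x * c, d⁆ = x * ⁅c, d⁆ + ⁅x, d⁆ * c := by
    simp only [Ring.lie_def]
    noncomm_ring
  have h := hB.commutator_mul_apply a b (x * c) d
  rw [hB.mul_left, leibniz_lie, mul_add, mul_add, ← mul_assoc _ (B x d),
    hB.commutator_mul_apply a b x d, mul_assoc _ _ c] at h
  simpa only [mul_assoc] using add_right_cancel h

end IsLeibnizBracket_s3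

section Span

variable {A : Type*} [NonUnitalRing A]

theorem mul_mul_eq_zero_of_mem_span {s : Set A} {w u : A}
    (hw : ∀ x, ∀ a ∈ s, w * x * a = 0) (hu : u ∈ TwoSidedIdeal.span s) (x : A) :
    w * x * u = 0 := by
  induction hu using TwoSidedIdeal.span_induction generalizing x with
  | mem a ha => exact hw x a ha
  | zero => exact mul_zero _
  | add u v _ _ hu hv => rw [mul_add, hu, hv, add_zero]
  | neg u _ hu => rw [mul_neg, hu, neg_zero]
  | left_absorb a u _ hu => rw [← mul_assoc, mul_assoc w, hu]
  | right_absorb a u _ hu => rw [← mul_assoc, hu, zero_mul]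

theorem exists_mul_mul_eq_of_mem_span {ι : Type*} {f g : ι → A}
    (hfg : ∀ i j x, g i * x * f j = f i * x * g j) {u : A}
    (hu : u ∈ TwoSidedIdeal.span (Set.range g)) :
    ∃ v, ∀ x j, u * x * f j = v * x * g j := by
  induction hu using TwoSidedIdeal.span_induction with
  | mem u hu =>
    obtain ⟨i, rfl⟩ := hu
    exact ⟨f i, fun x j => hfg i j x⟩
  | zero => exact ⟨0, fun x j => by simp only [zero_mul]⟩
  | add u u' _ _ hu hu' =>
    obtain ⟨v, hv⟩ := hu
    obtain ⟨v', hv'⟩ := hu'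
    exact ⟨v + v', fun x j => by simp only [add_mul, hv, hv']⟩
  | neg u _ hu =>
    obtain ⟨v, hv⟩ := hu
    exact ⟨-v, fun x j => by simp only [neg_mul, hv]⟩
  | left_absorb a u _ hu =>
    obtain ⟨v, hv⟩ := hu
    exact ⟨a * v, fun x j => by rw [mul_assoc a, mul_assoc a, hv, mul_assoc a, mul_assoc a]⟩
  | right_absorb a u _ hu =>
    obtain ⟨v, hv⟩ := hu
    exact ⟨v * a, fun x j => by rw [mul_assoc u, mul_assoc v, hv]⟩

end Span

theorem exists_mem_center_forall_eq_mul {A : Type*} [Ring A] {ι : Type*} {f g : ι → A}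
    (hg : TwoSidedIdeal.span (Set.range g) = ⊤)
    (hfg : ∀ i j x, g i * x * f j = f i * x * g j) :
    ∃ z ∈ Subring.center A, ∀ i, f i = z * g i := by
  have one_mem : (1 : A) ∈ TwoSidedIdeal.span (Set.range g) := hg ▸ TwoSidedIdeal.mem_top A
  obtain ⟨z, hz⟩ := exists_mul_mul_eq_of_mem_span hfg one_mem
  simp only [one_mul] at hz
  refine ⟨z, Subring.mem_center_iff.mpr fun x => ?_, fun i => by simpa using hz 1 i⟩
  have commutator_kills : ∀ y, ∀ a ∈ Set.range g, (x * z - z * x) * y * a = 0 := by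
    rintro y _ ⟨i, rfl⟩
    calc (x * z - z * x) * y * g i = x * (z * y * g i) - z * (x * y) * g i := by noncomm_ring
      _ = x * (y * f i) - x * y * f i := by rw [hz, hz]
      _ = 0 := by rw [mul_assoc, sub_self]
  have h := mul_mul_eq_zero_of_mem_span commutator_kills one_mem 1
  rwa [mul_one, mul_one, sub_eq_zero] at h

theorem leibniz_bracket_eq_scalar_mul_commutator_general {A : Type*} [Ring A]
    (hA : IsStronglyNoncommutative A) {B : A → A → A} (hB : IsLeibnizBracket_s3 B) :
    ∃ z ∈ Subring.center A, ∀ a b, B a b = z * ⁅a, b⁆ := by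
  obtain ⟨z, hz, hBz⟩ := exists_mem_center_forall_eq_mul (f := fun p : A × A => B p.1 p.2) hA
    fun p q x => hB.commutator_mul_mul_apply p.1 p.2 q.1 q.2 x
  exact ⟨z, hz, fun a b => hBz (a, b)⟩

/-- **Theorem 1 (last part).** If `A` is a strongly non-commutative unital
associative algebra over a commutative ring `k` with trivial center, then every
`k`-bilinear operation satisfying the Leibniz rule in both arguments is
`λ·[a,b]` for some `λ ∈ k`. -/
theorem leibniz_bracket_eq_scalar_mul_commutator
    {k : Type*} [CommRing k] {A : Type*} [Ring A] [Algebra k A]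
    (hSNC : ∀ I : TwoSidedIdeal A, (∀ a b : A, a * b - b * a ∈ I) → I = ⊤)
    (hcenter : ∀ c : A, (∀ x : A, c * x = x * c) → ∃ t : k, c = algebraMap k A t)
    (B : A → A → A)
    (haddl : ∀ a b c : A, B (a + b) c = B a c + B b c)
    (haddr : ∀ a b c : A, B a (b + c) = B a b + B a c)
    (hsmull : ∀ (t : k) (a b : A), B (t • a) b = t • B a b)
    (hsmulr : ∀ (t : k) (a b : A), B a (t • b) = t • B a b)
    (hleib_r : ∀ a b₁ b₂ : A, B a (b₁ * b₂) = b₁ * B a b₂ + B a b₁ * b₂)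
    (hleib_l : ∀ a b₁ b₂ : A, B (b₁ * b₂) a = b₁ * B b₂ a + B b₁ a * b₂) :
    ∃ lam : k, ∀ a b : A, B a b = lam • (a * b - b * a) := by
  obtain ⟨z, hz, hBz⟩ := leibniz_bracket_eq_scalar_mul_commutator_general
    (hSNC _ fun a b => TwoSidedIdeal.subset_span ⟨(a, b), rfl⟩)
    ⟨fun a b c => hleib_l c a b, hleib_r⟩
  obtain ⟨t, rfl⟩ := hcenter z fun x => (Subring.mem_center_iff.mp hz x).symm
  exact ⟨t, fun a b => (hBz a b).trans (Algebra.smul_def t _).symm⟩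
end

section
/- Let k be a commutative unital ring, n ≥ 2, and A = Matrix n n k the algebra of n×n matrices over k. Then every k-bilinear operation B : A × A → A satisfying the Leibniz rule in both arguments is of the form B(X,Y) = λ·(XY − YX) for some λ ∈ k. -/
/-! Expanding `B (a * b) (c * d)` by the two Leibniz rules in either order gives
`⁅a, c⁆ * B b d = B a c * ⁅b, d⁆`; replacing `b` by a product `b * x` inserts an arbitrary middle
factor, `⁅a, c⁆ * b * B x d = B a c * b * ⁅x, d⁆`. For `p ≠ q` the matrix unit
`E_pq = ⁅E_pp, E_pq⁆` is a commutator, so the choice `b = E_qi` turns the `(p, j)` entry of this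
identity into `(B X Y)_ij = λ ⁅X, Y⁆_ij` with `λ = (B E_pp E_pq)_pq`. -/

/-- A binary operation satisfying the Leibniz rule in each argument. Biadditivity is not
part of the definition; a biadditive such operation is a biderivation. -/
structure IsBiLeibniz_s4 {A : Type*} [Mul A] [Add A] (B : A → A → A) : Prop where
  map_mul_left (a b c : A) : B (a * b) c = a * B b c + B a c * b
  map_mul_right (a b c : A) : B a (b * c) = b * B a c + B a b * c

namespace IsBiLeibniz_s4

variable {A : Type*} [NonUnitalRing A] {B : A → A → A}

theorem lie_mul_map (hB : IsBiLeibniz_s4 B) (a b c d : A) : ⁅a, c⁆ * B b d = B a c * ⁅b, d⁆ := by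
  have left_first : B (a * b) (c * d) =
      a * (c * B b d + B b c * d) + (c * B a d + B a c * d) * b := by
    rw [hB.map_mul_left, hB.map_mul_right b, hB.map_mul_right a]
  have right_first : B (a * b) (c * d) =
      c * (a * B b d + B a d * b) + (a * B b c + B a c * b) * d := by
    rw [hB.map_mul_right, hB.map_mul_left a b d, hB.map_mul_left a b c]
  have expansions_agree := left_first.symm.trans right_first
  rw [Ring.lie_def, Ring.lie_def]
  linear_combination (norm := noncomm_ring) expansions_agree

theorem lie_mul_mul_map (hB : IsBiLeibniz_s4 B) (a b c d x : A) :
    ⁅a, c⁆ * b * B x d = B a c * b * ⁅x, d⁆ :=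
  calc
    ⁅a, c⁆ * b * B x d = ⁅a, c⁆ * (B (b * x) d - B b d * x) := by
      rw [hB.map_mul_left, add_sub_cancel_right, mul_assoc]
    _ = B a c * ⁅b * x, d⁆ - B a c * ⁅b, d⁆ * x := by
      rw [mul_sub, ← mul_assoc, hB.lie_mul_map, hB.lie_mul_map]
    _ = B a c * b * ⁅x, d⁆ := by
      simp only [Ring.lie_def]
      noncomm_ring

end IsBiLeibniz_s4

theorem mul_single_mul_apply {l m n o R : Type*} [Fintype m] [Fintype n] [DecidableEq m]
    [DecidableEq n] [NonUnitalNonAssocSemiring R] (M : Matrix l m R) (N : Matrix n o R)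
    (h : l) (i : m) (j : n) (k : o) (r : R) :
    (M * Matrix.single i j r * N : Matrix l o R) h k = M h i * r * N j k := by
  rw [Matrix.mul_apply, Finset.sum_eq_single j]
  · rw [Matrix.mul_single_apply_same]
  · intro j' _ hj'
    rw [Matrix.mul_single_apply_of_ne _ _ _ _ _ hj', zero_mul]
  · simp

theorem lie_single_same_single {n R : Type*} [Fintype n] [DecidableEq n] [NonAssocRing R]
    {i j : n} (hij : i ≠ j) (r : R) :
    ⁅(Matrix.single i i 1 : Matrix n n R), Matrix.single i j r⁆ = Matrix.single i j r := by
  rw [Ring.lie_def, Matrix.single_mul_single_same, one_mul,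
    Matrix.single_mul_single_of_ne _ _ _ _ hij.symm, sub_zero]

theorem leibniz_bracket_on_matrices_general {ι R : Type*} [Fintype ι] [Nontrivial ι] [Ring R]
    {B : Matrix ι ι R → Matrix ι ι R → Matrix ι ι R} (hB : IsBiLeibniz_s4 B) :
    ∃ lam : R, ∀ X Y, B X Y = lam • (X * Y - Y * X) := by
  classical
  obtain ⟨p, q, hpq⟩ := exists_pair_ne ι
  let Epp : Matrix ι ι R := Matrix.single p p 1
  let Epq : Matrix ι ι R := Matrix.single p q 1
  refine ⟨B Epp Epq p q, fun X Y => ?_⟩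
  ext i j
  calc
    B X Y i j = (⁅Epp, Epq⁆ * Matrix.single q i 1 * B X Y : Matrix ι ι R) p j := by
      rw [lie_single_same_single hpq, mul_single_mul_apply, Matrix.single_apply_same, one_mul,
        one_mul]
    _ = (B Epp Epq * Matrix.single q i 1 * ⁅X, Y⁆ : Matrix ι ι R) p j := by
      rw [hB.lie_mul_mul_map]
    _ = (B Epp Epq p q • (X * Y - Y * X)) i j := by
      rw [mul_single_mul_apply, mul_one, Ring.lie_def, Matrix.smul_apply, smul_eq_mul]

/-- **Corollary 1.** Every `k`-bilinear operation on the matrix algebra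
`gl(n,k)` (`n ≥ 2`, `k` a commutative unital ring) satisfying the Leibniz rule
in both arguments is of the form `B(X,Y) = λ·(XY - YX)` for some `λ ∈ k`. -/
theorem leibniz_bracket_on_matrices
    {k : Type*} [CommRing k] (n : ℕ) (hn : 2 ≤ n)
    (B : Matrix (Fin n) (Fin n) k → Matrix (Fin n) (Fin n) k → Matrix (Fin n) (Fin n) k)
    (haddl : ∀ a b c, B (a + b) c = B a c + B b c)
    (haddr : ∀ a b c, B a (b + c) = B a b + B a c)
    (hsmull : ∀ (t : k) a b, B (t • a) b = t • B a b)
    (hsmulr : ∀ (t : k) a b, B a (t • b) = t • B a b)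
    (hleib_r : ∀ a b₁ b₂, B a (b₁ * b₂) = b₁ * B a b₂ + B a b₁ * b₂)
    (hleib_l : ∀ a b₁ b₂, B (b₁ * b₂) a = b₁ * B b₂ a + B b₁ a * b₂) :
    ∃ lam : k, ∀ X Y, B X Y = lam • (X * Y - Y * X) := by
  have : Nontrivial (Fin n) := Fin.nontrivial_iff_two_le.mpr hn
  exact leibniz_bracket_on_matrices_general ⟨fun a b c => hleib_l c a b, hleib_r⟩
end

section
/- Let k be a field of characteristic zero and A a commutative unital k-algebra with no nonzero nilpotent elements. Let B : A × A → A be a k-bilinear bracket which is a bidifferential operator of some order n (i.e. of differential order ≤ n in each argument separately) and satisfies the Loday Jacobi identity B(x,B(y,z)) = B(B(x,y),z) + B(y,B(x,z)) for all x, y, z ∈ A. Then B is of order ≤ 1 in each argument: δ(u)δ(v) applied to B(x,·) vanishes and δ(u)δ(v) applied to B(·,x) vanishes, for all u, v, x ∈ A. -/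
/-- `(δ(x)D)(y) = D(x*y) - x*D(y)`. -/
def delta {A : Type*} [NonUnitalNonAssocRing A] (x : A) (D : A → A) : A → A :=
  fun y => D (x * y) - x * D y

/-- `D : A → A` is a differential operator of order `≤ n` if
`δ(x₁)⋯δ(x_{n+1}) D = 0` for all `x₁, …, x_{n+1} ∈ A`. -/
def IsDiffOpLE {A : Type*} [NonUnitalNonAssocRing A] : ℕ → (A → A) → Prop
  | 0, D => ∀ x : A, delta x D = 0
  | n + 1, D => ∀ x : A, IsDiffOpLE n (delta x D)

/-!
Suppose the `B(x,·)` have order `r ≥ 2`, and let `σ_u(x)` be the value at the covector `du`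
of the principal symbol of `B(x,·)`. In the commutator identity `[B(x,·), B(y,·)] = B(B(x,y),·)` the
right-hand side has order less than `2 r - 1`, so the symbols of `B(x,·)` and `B(y,·)` Poisson
commute. Read as an equality of operators in `y`, this says that `D * σ_u` has order at most that of
`σ_u`, where `D` is a first-order operator with symbol `σ_u(x)` at `du`. Hence `σ_u(x)` annihilates
the symbol of `σ_u`, which is therefore nilpotent, hence zero; so `σ_u = 0`, and `r` drops to `1`.
Finally `B(B(x,y),y) = B(x,B(y,y)) - B(y,B(x,y))` bounds the order of the square of `B(·,y)` by one
more than that of `B(·,y)`, which forces the latter to be at most `1`.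
-/

open Finset
open AddMonoid.End (mulLeft mulRight coe_mul)

section Polarization

variable {N : Type*} [AddCommGroup N] [IsAddTorsionFree N]

instance isAddTorsionFree_addMonoidEnd : IsAddTorsionFree (AddMonoid.End N) :=
  DFunLike.coe_injective.isAddTorsionFree (AddMonoidHom.coeFn N N)

-- Comparing `p (2 * t)` with `2 ^ n • p t` eliminates the top coefficient.
lemma eq_zero_of_forall_sum_pow_nsmul_eq_zero {n : ℕ} {a : ℕ → N}
    (h : ∀ t : ℕ, ∑ i ∈ range n, t ^ i • a i = 0) : ∀ i < n, a i = 0 := by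
  induction n generalizing a with
  | zero => simp
  | succ n ih =>
    have hlow : ∀ i < n, (2 ^ n - 2 ^ i : ℤ) • a i = 0 := by
      refine ih fun t => ?_
      have hdiff : (2 ^ n : ℤ) • ∑ i ∈ range (n + 1), t ^ i • a i -
          ∑ i ∈ range (n + 1), (2 * t) ^ i • a i = 0 := by
        rw [h, h, smul_zero, sub_zero]
      rw [smul_sum, ← sum_sub_distrib, sum_range_succ] at hdiff
      convert hdiff using 1
      have htop : (2 ^ n : ℤ) • t ^ n • a n - (2 * t) ^ n • a n = 0 := by
        module
      rw [htop, add_zero]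
      exact sum_congr rfl fun i _ => by module
    replace hlow : ∀ i < n, a i = 0 := fun i hi =>
      (smul_eq_zero_iff_right <| sub_ne_zero.2 (pow_lt_pow_right₀ one_lt_two hi).ne').1 (hlow i hi)
    intro i hi
    obtain hi | rfl := Nat.lt_succ_iff_lt_or_eq.1 hi
    · exact hlow i hi
    · have htop := h 1
      rw [sum_range_succ,
        sum_eq_zero fun j hj => by rw [hlow j (mem_range.1 hj), smul_zero]] at htop
      simpa using htop

lemma map_pow_mul_pow_eq_zero_of_forall_map_add_pow_eq_zero {R : Type*} [Ring R] (Φ : R →+ N)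
    {x y : R} (hxy : Commute x y) {i j : ℕ}
    (h : ∀ t : ℕ, Φ ((t • x + y) ^ (i + j)) = 0) : Φ (x ^ i * y ^ j) = 0 := by
  have hexp : ∀ t : ℕ, ∑ l ∈ range (i + j + 1),
      t ^ l • (i + j).choose l • Φ (x ^ l * y ^ (i + j - l)) = 0 := by
    intro t
    rw [← h t, (hxy.smul_left t).add_pow, map_sum]
    refine sum_congr rfl fun l _ => ?_
    rw [smul_pow, ← nsmul_eq_mul', smul_mul_assoc, map_nsmul, map_nsmul, smul_comm]
  have hcoeff := eq_zero_of_forall_sum_pow_nsmul_eq_zero hexp i (by omega)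
  rwa [nsmul_eq_zero_iff_right (Nat.choose_pos (by omega)).ne', Nat.add_sub_cancel_left] at hcoeff

end Polarization

section Leibniz

section Powers

variable {M : Type*} [AddCommMonoid M]

lemma pow_succ_apply (d : AddMonoid.End M) (n : ℕ) (a : M) : (d ^ (n + 1)) a = (d ^ n) (d a) := by
  rw [pow_succ, coe_mul, Function.comp_apply]

lemma pow_succ_apply' (d : AddMonoid.End M) (n : ℕ) (a : M) : (d ^ (n + 1)) a = d ((d ^ n) a) := by
  rw [pow_succ', coe_mul, Function.comp_apply]

lemma pow_apply_eq_zero_of_le {d : AddMonoid.End M} {a : M} {i j : ℕ} (h : (d ^ i) a = 0)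
    (hij : i ≤ j) : (d ^ j) a = 0 := by
  obtain ⟨l, rfl⟩ := Nat.exists_eq_add_of_le' hij
  rw [pow_add, coe_mul, Function.comp_apply, h, map_zero]

end Powers

variable {R : Type*} [NonUnitalNonAssocSemiring R] {d : AddMonoid.End R}

lemma pow_apply_mul_pow_apply_eq_zero {i j p q : ℕ} {a b : R} (ha : (d ^ i) a = 0)
    (hb : (d ^ j) b = 0) (h : i ≤ p ∨ j ≤ q) : (d ^ p) a * (d ^ q) b = 0 := by
  obtain hp | hq := h
  · rw [pow_apply_eq_zero_of_le ha hp, zero_mul]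
  · rw [pow_apply_eq_zero_of_le hb hq, mul_zero]

variable (hd : ∀ a b, d (a * b) = d a * b + a * d b)

include hd

theorem pow_apply_mul (n : ℕ) (a b : R) :
    (d ^ n) (a * b) = ∑ p ∈ antidiagonal n, n.choose p.1 • ((d ^ p.1) a * (d ^ p.2) b) := by
  induction n with
  | zero => simp
  | succ n ih =>
    rw [sum_antidiagonal_choose_succ_nsmul (fun i j => (d ^ i) a * (d ^ j) b), pow_succ_apply', ih,
      map_sum, ← sum_add_distrib]
    refine sum_congr rfl fun p hp => ?_
    have hchoose : n.choose p.2 = n.choose p.1 :=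
      Nat.choose_symm_of_eq_add (by grind [HasAntidiagonal.mem_antidiagonal])
    rw [map_nsmul, hd, nsmul_add, ← pow_succ_apply', ← pow_succ_apply', hchoose, add_comm]

lemma pow_apply_mul_eq_zero {n i j : ℕ} {a b : R} (ha : (d ^ i) a = 0) (hb : (d ^ j) b = 0)
    (hij : i + j ≤ n + 1) : (d ^ n) (a * b) = 0 := by
  rw [pow_apply_mul hd]
  refine sum_eq_zero fun p hp => ?_
  have hdeg : p.1 + p.2 = n := mem_antidiagonal.1 hp
  rw [pow_apply_mul_pow_apply_eq_zero ha hb (by omega), smul_zero]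

lemma pow_add_apply_mul {i j : ℕ} {a b : R} (ha : (d ^ (i + 1)) a = 0)
    (hb : (d ^ (j + 1)) b = 0) :
    (d ^ (i + j)) (a * b) = (i + j).choose i • ((d ^ i) a * (d ^ j) b) := by
  rw [pow_apply_mul hd, sum_eq_single (i, j) _ (by simp)]
  rintro ⟨p, q⟩ hpq hne
  have hdeg : p + q = i + j := mem_antidiagonal.1 hpq
  rw [pow_apply_mul_pow_apply_eq_zero ha hb (by grind), smul_zero]

lemma pow_add_add_one_apply_mul {i j : ℕ} {a b : R} (ha : (d ^ (i + 2)) a = 0)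
    (hb : (d ^ (j + 2)) b = 0) :
    (d ^ (i + j + 1)) (a * b) = (i + j + 1).choose i • ((d ^ i) a * (d ^ (j + 1)) b) +
      (i + j + 1).choose j • ((d ^ (i + 1)) a * (d ^ j) b) := by
  have hchoose : (i + j + 1).choose j = (i + j + 1).choose (i + 1) :=
    Nat.choose_symm_of_eq_add (by omega)
  rw [pow_apply_mul hd, hchoose, sum_eq_add (i, j + 1) (i + 1, j) (by simp) _
    (by grind [HasAntidiagonal.mem_antidiagonal]) (by grind [HasAntidiagonal.mem_antidiagonal])]
  rintro ⟨p, q⟩ hpq hne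
  have hdeg : p + q = i + j + 1 := mem_antidiagonal.1 hpq
  rw [pow_apply_mul_pow_apply_eq_zero ha hb (by grind), smul_zero]

lemma pow_succ_apply_mul {a b : R} (ha : d (d a) = 0) (n : ℕ) :
    (d ^ (n + 1)) (a * b) = a * (d ^ (n + 1)) b + (n + 1) • (d a * (d ^ n) b) := by
  induction n with
  | zero => simp [hd, add_comm]
  | succ n ih =>
    rw [pow_succ_apply', ih, map_add, map_nsmul, hd, hd, ha, zero_mul, zero_add,
      ← pow_succ_apply', ← pow_succ_apply', succ_nsmul' _ (n + 1)]
    abel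

end Leibniz

section DifferentialOperators

variable {A : Type*} [CommRing A]

/-- The operator `δ(u)` on additive endomorphisms of `A`, additive in `u`. As a commutator with a
multiplication operator it is a derivation of the ring `AddMonoid.End A`. -/
def deltaHom : A →+ AddMonoid.End (AddMonoid.End A) :=
  (mulRight - mulLeft : AddMonoid.End A →+ AddMonoid.End (AddMonoid.End A)).comp mulLeft

lemma deltaHom_def (u : A) (D : AddMonoid.End A) :
    deltaHom u D = D * mulLeft u - mulLeft u * D := rfl

lemma deltaHom_apply (u : A) (D : AddMonoid.End A) (y : A) :
    deltaHom u D y = D (u * y) - u * D y := rfl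

lemma deltaHom_mul (u : A) (D E : AddMonoid.End A) :
    deltaHom u (D * E) = deltaHom u D * E + D * deltaHom u E := by
  simp only [deltaHom_def, sub_mul, mul_sub, mul_assoc]
  abel

lemma deltaHom_mulLeft (u a : A) : deltaHom u (mulLeft a) = 0 :=
  AddMonoidHom.ext fun y => sub_eq_zero.2 (mul_left_comm a u y)

lemma deltaHom_commute (u v : A) : Commute (deltaHom u) (deltaHom v) := by
  ext D y
  simp only [coe_mul, Function.comp_apply, deltaHom_apply, mul_left_comm u v]
  ring

lemma pow_deltaHom_mulLeft_mul (u a : A) (n : ℕ) (D : AddMonoid.End A) :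
    (deltaHom u ^ n) (mulLeft a * D) = mulLeft a * (deltaHom u ^ n) D := by
  induction n with
  | zero => simp
  | succ n ih => rw [pow_succ_apply', ih, deltaHom_mul, deltaHom_mulLeft, zero_mul, zero_add,
      ← pow_succ_apply']

/-- `D` is a differential operator of order `< r`, tested on powers of a single `δ(u)`; by
polarization this agrees with `IsDiffOpLE` on torsion-free rings, see `isDiffOpLE_iff`. The strict
bound makes room for the zero operator at `r = 0`. -/
def HasOrderLT (r : ℕ) (D : AddMonoid.End A) : Prop :=
  ∀ u, (deltaHom u ^ r) D = 0

lemma hasOrderLT_mulLeft (a : A) : HasOrderLT 1 (mulLeft a) := fun u => by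
  rw [pow_one, deltaHom_mulLeft]

namespace HasOrderLT

variable {r s : ℕ} {D E : AddMonoid.End A}

lemma mono (h : HasOrderLT r D) (hrs : r ≤ s) : HasOrderLT s D :=
  fun u => pow_apply_eq_zero_of_le (h u) hrs

lemma sub (hD : HasOrderLT r D) (hE : HasOrderLT r E) : HasOrderLT r (D - E) := fun u => by
  rw [map_sub, hD u, hE u, sub_zero]

lemma mul {n : ℕ} (hD : HasOrderLT r D) (hE : HasOrderLT s E) (hn : r + s ≤ n + 1) :
    HasOrderLT n (D * E) :=
  fun u => pow_apply_mul_eq_zero (deltaHom_mul u) (hD u) (hE u) hn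

lemma mulLeft_mul (hD : HasOrderLT r D) (a : A) : HasOrderLT r (mulLeft a * D) := fun u => by
  rw [pow_deltaHom_mulLeft_mul, hD u, mul_zero]

lemma eq_mulLeft (h : HasOrderLT 1 D) : D = mulLeft (D 1) := by
  ext y
  have hy : deltaHom y D 1 = 0 := by rw [← pow_one (deltaHom y), h y, AddMonoid.End.zero_apply]
  rwa [deltaHom_apply, mul_one, sub_eq_zero, mul_comm] at hy

lemma apply_eq (h : HasOrderLT 1 D) (y : A) : D y = D 1 * y :=
  DFunLike.congr_fun h.eq_mulLeft y

variable [IsAddTorsionFree A]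

protected lemma deltaHom (h : HasOrderLT (r + 1) D) (v : A) : HasOrderLT r (deltaHom v D) := by
  intro u
  have hdiag : ∀ t : ℕ, ((t • deltaHom u + deltaHom v) ^ (r + 1)) D = 0 := fun t => by
    rw [← map_nsmul, ← map_add, h]
  have hpol : (deltaHom u ^ r * deltaHom v ^ 1) D = 0 :=
    map_pow_mul_pow_eq_zero_of_forall_map_add_pow_eq_zero
      (.mk' (fun F : AddMonoid.End (AddMonoid.End A) => F D) fun _ _ => rfl)
      (deltaHom_commute u v) hdiag
  rwa [pow_one] at hpol

lemma pow_deltaHom {i j : ℕ} (h : HasOrderLT (j + i) D) (u : A) :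
    HasOrderLT i ((deltaHom u ^ j) D) := by
  induction j generalizing D with
  | zero => exact zero_add i ▸ h
  | succ j ih =>
    rw [add_right_comm] at h
    rw [pow_succ_apply]
    exact ih (h.deltaHom u)

lemma of_pow_deltaHom_apply_one_eq_zero (h : HasOrderLT (r + 1) D)
    (h1 : ∀ u, (deltaHom u ^ r) D 1 = 0) : HasOrderLT r D := fun u => by
  rw [(h.pow_deltaHom u).eq_mulLeft, h1, map_zero]

lemma of_mul_self [IsReduced A] (h : HasOrderLT (r + 1) D) (hsq : HasOrderLT (r + r) (D * D)) :
    HasOrderLT r D := by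
  refine h.of_pow_deltaHom_apply_one_eq_zero fun u => ?_
  have hmul := pow_add_apply_mul (deltaHom_mul u) (h u) (h u)
  rw [hsq u, eq_comm, nsmul_eq_zero_iff_right (Nat.choose_pos (by omega)).ne'] at hmul
  have hsymbol := DFunLike.congr_fun hmul 1
  rw [coe_mul, Function.comp_apply, (h.pow_deltaHom u).apply_eq] at hsymbol
  exact (pow_eq_zero_iff two_ne_zero).1 ((sq _).trans hsymbol)

end HasOrderLT

theorem isDiffOpLE_iff [IsAddTorsionFree A] {n : ℕ} {D : AddMonoid.End A} :
    IsDiffOpLE n D ↔ HasOrderLT (n + 1) D := by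
  induction n generalizing D with
  | zero => simp only [IsDiffOpLE, HasOrderLT, zero_add, pow_one, DFunLike.ext_iff, funext_iff]; rfl
  | succ n ih =>
    refine ⟨fun h u => ?_, fun h u => (ih (D := deltaHom u D)).2 (h.deltaHom u)⟩
    rw [pow_succ_apply]
    exact (ih (D := deltaHom u D)).1 (h u) u

-- With `α w = deltaHom w D 1` and `g w = (deltaHom w ^ r) S 1`, the order of `D * S` gives
-- `α w * g w = 0`. Differentiating in the direction `v` and multiplying by `α v * g w` yields
-- `(α v * g w) ^ 2 = 0`.
theorem deltaHom_apply_one_mul_pow_deltaHom_apply_one_eq_zero [IsAddTorsionFree A] [IsReduced A]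
    {r : ℕ} {D S : AddMonoid.End A} (hD : HasOrderLT 2 D) (hS : HasOrderLT (r + 1) S)
    (hDS : HasOrderLT (r + 1) (D * S)) (v w : A) :
    deltaHom v D 1 * (deltaHom w ^ r) S 1 = 0 := by
  have hdiag (w : A) : deltaHom w D 1 * (deltaHom w ^ r) S 1 = 0 := by
    have hleib := pow_succ_apply_mul (deltaHom_mul w) (b := S) (hD w) r
    rw [hDS w, hS w, mul_zero, zero_add, eq_comm, nsmul_eq_zero_iff_right r.succ_ne_zero] at hleib
    rw [← (hD.deltaHom w).apply_eq]
    exact DFunLike.congr_fun hleib 1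
  cases r with
  | zero => exact hdiag v
  | succ r =>
    have hpol : (deltaHom w ^ (r + 1)) (deltaHom v D * S + D * deltaHom v S) = 0 := by
      rw [← deltaHom_mul, hDS.deltaHom v w]
    rw [map_add, (hD.deltaHom v).eq_mulLeft, pow_deltaHom_mulLeft_mul,
      pow_succ_apply_mul (deltaHom_mul w) (hD w), hS.deltaHom v w, mul_zero, zero_add] at hpol
    have hpol1 : deltaHom v D 1 * (deltaHom w ^ (r + 1)) S 1 +
        (r + 1) • (deltaHom w D 1 * (deltaHom w ^ r) (deltaHom v S) 1) = 0 := by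
      rw [← (hD.deltaHom w).apply_eq]
      exact DFunLike.congr_fun hpol 1
    rw [nsmul_eq_mul] at hpol1
    refine pow_eq_zero_iff two_ne_zero |>.1 ?_
    linear_combination (deltaHom v D 1 * (deltaHom w ^ (r + 1)) S 1) * hpol1 -
      (↑(r + 1) * (deltaHom w ^ r) (deltaHom v S) 1 * deltaHom v D 1) * hdiag w

end DifferentialOperators

section LodayBracket

variable {A : Type*} [CommRing A]

/-- The left Loday (Leibniz) identity for a biadditive bracket: each `B x` is a derivation
of `B`. -/
def IsLodayBracket (B : A →+ AddMonoid.End A) : Prop :=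
  ∀ x y z, B x (B y z) = B (B x y) z + B y (B x z)

lemma IsLodayBracket.apply_mul_sub_mul {B : A →+ AddMonoid.End A} (hB : IsLodayBracket B)
    (x y : A) : B x * B y - B y * B x = B (B x y) :=
  AddMonoidHom.ext fun z => sub_eq_of_eq_add (hB x y z)

/-- The bracket `B` with its two arguments exchanged. -/
def flipBracket (B : A →+ AddMonoid.End A) : A →+ AddMonoid.End A :=
  AddMonoidHom.flip B

lemma IsLodayBracket.flipBracket_mul_self {B : A →+ AddMonoid.End A} (hB : IsLodayBracket B)
    (y : A) :
    flipBracket B y * flipBracket B y = flipBracket B (B y y) - B y * flipBracket B y :=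
  AddMonoidHom.ext fun x => eq_sub_of_add_eq (hB x y y).symm

/-- The operator `y ↦ F (B y) c`, additive in `F`. It reads an identity between the operators
`F (B y)`, evaluated at `c`, as one between operators in `y`. -/
def evalAlong (B : A →+ AddMonoid.End A) (c : A) :
    AddMonoid.End (AddMonoid.End A) →+ AddMonoid.End A :=
  .mk' (fun F => .mk' (fun y => F (B y) c) fun y z => by rw [map_add, map_add]; rfl) fun _ _ => rfl

lemma hasOrderLT_evalAlong_pow_deltaHom {B : A →+ AddMonoid.End A} {r : ℕ}
    (hl : ∀ c, HasOrderLT r (flipBracket B c)) (u : A) (m : ℕ) (c : A) :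
    HasOrderLT r (evalAlong B c (deltaHom u ^ m)) := by
  induction m generalizing c with
  | zero => exact hl c
  | succ m ih =>
    have hrec : evalAlong B c (deltaHom u ^ (m + 1)) =
        evalAlong B (u * c) (deltaHom u ^ m) - mulLeft u * evalAlong B c (deltaHom u ^ m) := by
      rw [pow_succ']
      rfl
    rw [hrec]
    exact (ih _).sub ((ih c).mulLeft_mul u)

/-- The symbol of order `r` of the operators `B y` at the covector `du`, as a function of `y`. -/
def symbol (B : A →+ AddMonoid.End A) (r : ℕ) (u : A) : AddMonoid.End A :=
  evalAlong B 1 (deltaHom u ^ r)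

lemma symbol_apply (B : A →+ AddMonoid.End A) (r : ℕ) (u y : A) :
    symbol B r u y = (deltaHom u ^ r) (B y) 1 := rfl

variable [IsAddTorsionFree A] {B : A →+ AddMonoid.End A} {m r s : ℕ}

lemma pow_deltaHom_eq_mulLeft_symbol (hr : ∀ x, HasOrderLT (r + 1) (B x)) (u x : A) :
    (deltaHom u ^ r) (B x) = mulLeft (symbol B r u x) :=
  ((hr x).pow_deltaHom u).eq_mulLeft

-- The commutator of `B x` and `B y` is `B (B x y)`, whose order is too small for the Poisson
-- bracket of their symbols not to vanish.
lemma IsLodayBracket.deltaHom_symbol_comm (hB : IsLodayBracket B)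
    (hr : ∀ x, HasOrderLT (m + 3) (B x)) (u x y : A) :
    deltaHom (symbol B (m + 2) u y) ((deltaHom u ^ (m + 1)) (B x)) =
      deltaHom (symbol B (m + 2) u x) ((deltaHom u ^ (m + 1)) (B y)) := by
  have hcomm : (deltaHom u ^ (m + 1 + (m + 1) + 1)) (B x * B y - B y * B x) = 0 := by
    rw [hB.apply_mul_sub_mul]
    exact (hr _).mono (by omega) u
  rw [map_sub, pow_add_add_one_apply_mul (deltaHom_mul u) (hr x u) (hr y u),
    pow_add_add_one_apply_mul (deltaHom_mul u) (hr y u) (hr x u),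
    pow_deltaHom_eq_mulLeft_symbol hr, pow_deltaHom_eq_mulLeft_symbol hr,
    ← nsmul_add, ← nsmul_add, ← nsmul_sub,
    nsmul_eq_zero_iff_right (Nat.choose_pos (by omega)).ne'] at hcomm
  rw [deltaHom_def, deltaHom_def, ← sub_eq_zero, ← hcomm]
  abel

lemma IsLodayBracket.sub_mulLeft_mul_symbol (hB : IsLodayBracket B)
    (hr : ∀ x, HasOrderLT (m + 3) (B x)) (u x : A) :
    ((deltaHom u ^ (m + 1)) (B x) - mulLeft ((deltaHom u ^ (m + 1)) (B x) 1)) *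
        symbol B (m + 2) u =
      evalAlong B 1 (deltaHom (symbol B (m + 2) u x) * deltaHom u ^ (m + 1)) := by
  ext y
  have hcomm := DFunLike.congr_fun (hB.deltaHom_symbol_comm hr u x y) 1
  rw [deltaHom_apply, mul_one, mul_comm (symbol B (m + 2) u y)] at hcomm
  exact hcomm

lemma hasOrderLT_evalAlong_deltaHom_mul_pow_deltaHom
    (h : ∀ u, HasOrderLT r (symbol B (m + 1) u)) (u v : A) :
    HasOrderLT r (evalAlong B 1 (deltaHom v * deltaHom u ^ m)) := by
  intro w
  have hdiag : ∀ t : ℕ,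
      (deltaHom w ^ r) (evalAlong B 1 ((t • deltaHom v + deltaHom u) ^ (1 + m))) = 0 := fun t => by
    rw [← map_nsmul, ← map_add, add_comm 1]
    exact h _ w
  have hpol : (deltaHom w ^ r) (evalAlong B 1 (deltaHom v ^ 1 * deltaHom u ^ m)) = 0 :=
    map_pow_mul_pow_eq_zero_of_forall_map_add_pow_eq_zero
      (.mk' (fun F => (deltaHom w ^ r) (evalAlong B 1 F)) fun F G => by rw [map_add, map_add])
      (deltaHom_commute v u) hdiag
  rwa [pow_one] at hpol

lemma IsLodayBracket.symbol_mul_pow_deltaHom_symbol_eq_zero [IsReduced A] (hB : IsLodayBracket B)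
    (hr : ∀ x, HasOrderLT (m + 3) (B x)) (h : ∀ u, HasOrderLT (r + 1) (symbol B (m + 2) u))
    (u x w : A) : symbol B (m + 2) u x * (deltaHom w ^ r) (symbol B (m + 2) u) 1 = 0 := by
  set D := (deltaHom u ^ (m + 1)) (B x) - mulLeft ((deltaHom u ^ (m + 1)) (B x) 1) with hD_def
  have hD : HasOrderLT 2 D :=
    ((hr x).pow_deltaHom (i := 2) u).sub ((hasOrderLT_mulLeft _).mono one_le_two)
  have hDσ : HasOrderLT (r + 1) (D * symbol B (m + 2) u) := by
    rw [hB.sub_mulLeft_mul_symbol hr]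
    exact hasOrderLT_evalAlong_deltaHom_mul_pow_deltaHom h u _
  have hvalue : deltaHom u D 1 = symbol B (m + 2) u x := by
    rw [hD_def, map_sub, deltaHom_mulLeft, sub_zero, ← pow_succ_apply', symbol_apply]
  rw [← hvalue]
  exact deltaHom_apply_one_mul_pow_deltaHom_apply_one_eq_zero hD (h u) hDσ u w

lemma IsLodayBracket.hasOrderLT_symbol_of_succ [IsReduced A] (hB : IsLodayBracket B)
    (hr : ∀ x, HasOrderLT (m + 3) (B x)) (h : ∀ u, HasOrderLT (r + 1) (symbol B (m + 2) u))
    (u : A) : HasOrderLT r (symbol B (m + 2) u) := by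
  refine (h u).of_pow_deltaHom_apply_one_eq_zero fun w => ?_
  have hmul : mulLeft ((deltaHom w ^ r) (symbol B (m + 2) u) 1) * symbol B (m + 2) u = 0 :=
    AddMonoidHom.ext fun x =>
      (mul_comm _ _).trans (hB.symbol_mul_pow_deltaHom_symbol_eq_zero hr h u x w)
  have hsq := DFunLike.congr_fun (congrArg (deltaHom w ^ r) hmul) 1
  rw [pow_deltaHom_mulLeft_mul, map_zero] at hsq
  exact (pow_eq_zero_iff two_ne_zero).1 ((sq _).trans hsq)

theorem IsLodayBracket.hasOrderLT_of_succ [IsReduced A] (hB : IsLodayBracket B)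
    (hl : ∀ c, HasOrderLT s (flipBracket B c)) (hr : ∀ x, HasOrderLT (m + 3) (B x)) (x : A) :
    HasOrderLT (m + 2) (B x) := by
  have hsymbol : ∀ u, HasOrderLT 0 (symbol B (m + 2) u) := by
    have h : ∀ u, HasOrderLT s (symbol B (m + 2) u) := fun u =>
      hasOrderLT_evalAlong_pow_deltaHom hl u _ 1
    clear hl
    induction s with
    | zero => exact h
    | succ s ih => exact ih (hB.hasOrderLT_symbol_of_succ hr h)
  refine (hr x).of_pow_deltaHom_apply_one_eq_zero fun u => ?_
  rw [← symbol_apply]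
  exact DFunLike.congr_fun (hsymbol u u) x

theorem IsLodayBracket.hasOrderLT_two [IsReduced A] (hB : IsLodayBracket B)
    (hl : ∀ c, HasOrderLT s (flipBracket B c)) (hr : ∀ x, HasOrderLT (m + 2) (B x)) (x : A) :
    HasOrderLT 2 (B x) := by
  induction m with
  | zero => exact hr x
  | succ m ih => exact ih (hB.hasOrderLT_of_succ hl hr)

theorem IsLodayBracket.hasOrderLT_two_flipBracket [IsReduced A] (hB : IsLodayBracket B)
    (hl : ∀ y, HasOrderLT (m + 2) (flipBracket B y)) (hr : ∀ x, HasOrderLT 2 (B x)) (y : A) :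
    HasOrderLT 2 (flipBracket B y) := by
  induction m with
  | zero => exact hl y
  | succ m ih =>
    refine ih fun y => (hl y).of_mul_self ?_
    rw [hB.flipBracket_mul_self]
    exact ((hl _).mono (by omega)).sub ((hr y).mul (hl y) (by omega))

end LodayBracket

theorem differential_loday_bracket_order_le_one_general
    {A : Type*} [CommRing A] [IsReduced A] [IsAddTorsionFree A]
    (B : A → A → A)
    (haddl : ∀ a b c : A, B (a + b) c = B a c + B b c)
    (haddr : ∀ a b c : A, B a (b + c) = B a b + B a c)
    (n : ℕ)
    (horder : ∀ x : A, IsDiffOpLE n (fun y => B x y) ∧ IsDiffOpLE n (fun y => B y x))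
    (hjacobi : ∀ x y z : A, B x (B y z) = B (B x y) z + B y (B x z)) :
    ∀ u v x : A,
      delta u (delta v (fun y => B x y)) = 0 ∧
      delta u (delta v (fun y => B y x)) = 0 := by
  let B' : A →+ AddMonoid.End A :=
    .mk' (fun x => .mk' (B x) (haddr x)) fun x y => AddMonoidHom.ext (haddl x y)
  have hB : IsLodayBracket B' := hjacobi
  have hr (x : A) : HasOrderLT (n + 2) (B' x) :=
    (isDiffOpLE_iff.1 (horder x).1).mono (Nat.le_succ _)
  have hl (y : A) : HasOrderLT (n + 2) (flipBracket B' y) :=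
    (isDiffOpLE_iff (D := flipBracket B' y).1 (horder y).2).mono (Nat.le_succ _)
  have hr2 := hB.hasOrderLT_two hl hr
  have hl2 := hB.hasOrderLT_two_flipBracket hl hr2
  intro u v x
  exact ⟨isDiffOpLE_iff.2 (hr2 x) v u, isDiffOpLE_iff.2 (hl2 x) v u⟩

/-- **Proposition 2.** On a reduced commutative unital algebra over a field of
characteristic zero, every bidifferential Loday bracket is of order `≤ 1` in
each argument: `δ(u)δ(v)` applied to `B(x,·)` and to `B(·,x)` vanishes. -/
theorem differential_loday_bracket_order_le_one
    {k : Type*} [Field k] [CharZero k]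
    {A : Type*} [CommRing A] [Algebra k A] [IsReduced A]
    (B : A → A → A)
    (haddl : ∀ a b c : A, B (a + b) c = B a c + B b c)
    (haddr : ∀ a b c : A, B a (b + c) = B a b + B a c)
    (hsmull : ∀ (t : k) (a b : A), B (t • a) b = t • B a b)
    (hsmulr : ∀ (t : k) (a b : A), B a (t • b) = t • B a b)
    (n : ℕ)
    (horder : ∀ x : A, IsDiffOpLE n (fun y => B x y) ∧ IsDiffOpLE n (fun y => B y x))
    (hjacobi : ∀ x y z : A, B x (B y z) = B (B x y) z + B y (B x z)) :
    ∀ u v x : A,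
      delta u (delta v (fun y => B x y)) = 0 ∧
      delta u (delta v (fun y => B y x)) = 0 := by
  have : IsAddTorsionFree A := .of_isTorsionFree k A
  exact differential_loday_bracket_order_le_one_general B haddl haddr n horder hjacobi
end

section
/- Let k be a field of characteristic zero and A a commutative unital k-algebra with no nonzero nilpotent elements. Let B : A × A → A be a k-bilinear bracket of differential order ≤ 1 in each argument satisfying the Loday Jacobi identity B(x,B(y,z)) = B(B(x,y),z) + B(y,B(x,z)). Then B(z, B(x,x)) = 0 for all x, z ∈ A. -/
/-!
The principal symbol `σ_D(x) = D(x) - x D(1)` of a first-order operator `D` is multiplicative on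
compositions: if `T ∘ S = 0` with `T` additive, then `σ_S(x) σ_T(y) + σ_S(y) σ_T(x) = 0`, so over a
reduced ring without 2-torsion `σ_S(x) σ_T(y) = 0` for all `x`, `y`.

The Jacobi identity says that every `I(x, y) = B(x, y) + B(y, x)` lies in the left kernel of `B`.
Hence each value `s` of a symbol of `I(·, y)` annihilates all symbols of the operators `B(·, z)`.
The Jacobi identity forces such an `s` to annihilate `B` itself; as `s` is a combination of values
of `B`, it satisfies `s² = 0` and vanishes. Thus `I(x, y) = 2xy B(1, 1)`. As `B(1, 1)`
and `I(x, 1) = 2x B(1, 1)` lie in the left kernel, `B(1, 1)` annihilates the symbols of `B(·, z)`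
too, so it squares to zero, and `B` is alternating.
-/

section Operators

/-- Differential operators of order at most one, with no additivity required of `D`. -/
def IsFirstOrder {A : Type*} [NonUnitalNonAssocRing A] (D : A → A) : Prop :=
  ∀ u v : A, delta u (delta v D) = 0

/-- The principal symbol `σ_D` of a first-order operator: `δ(x)D` is then multiplication by
`σ_D(x)`, which is why it can be read off at `1`. -/
def principalSymbol {A : Type*} [NonAssocRing A] (D : A → A) (x : A) : A :=
  delta x D 1

theorem principalSymbol_apply {A : Type*} [NonAssocRing A] (D : A → A) (x : A) :
    principalSymbol D x = D x - x * D 1 := by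
  rw [principalSymbol, delta, mul_one]

theorem delta_add {A : Type*} [NonUnitalNonAssocRing A] (x : A) (D D' : A → A) :
    delta x (D + D') = delta x D + delta x D' := by
  funext y
  simp only [delta, Pi.add_apply, mul_add]
  abel

theorem IsFirstOrder.add {A : Type*} [NonUnitalNonAssocRing A] {D D' : A → A}
    (hD : IsFirstOrder D) (hD' : IsFirstOrder D') : IsFirstOrder (D + D') := fun u v => by
  rw [delta_add, delta_add, hD, hD', add_zero]

theorem IsFirstOrder.map_zero {A : Type*} [NonUnitalNonAssocRing A] {D : A → A}
    (hD : IsFirstOrder D) : D 0 = 0 := by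
  simpa [delta] using congrFun (hD 0 0) 0

variable {A : Type*} [CommRing A] {D S T : A → A}

theorem IsFirstOrder.map_mul (hD : IsFirstOrder D) (x y : A) :
    D (x * y) = x * D y + principalSymbol D x * y := by
  have h : delta x D (y * 1) - y * principalSymbol D x = 0 := congrFun (hD y x) 1
  rw [mul_one, delta] at h
  linear_combination h

theorem IsFirstOrder.principalSymbol_mul (hD : IsFirstOrder D) (x y : A) :
    principalSymbol D (x * y) = x * principalSymbol D y + y * principalSymbol D x := by
  rw [principalSymbol_apply D (x * y), hD.map_mul, principalSymbol_apply D y]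
  ring

theorem IsFirstOrder.map_mul_of_map_eq_zero (hD : IsFirstOrder D) {w : A} (hw : D w = 0) (x : A) :
    D (w * x) = w * principalSymbol D x := by
  rw [mul_comm, hD.map_mul, hw, mul_zero, zero_add, mul_comm]

theorem principalSymbol_mul_add_eq_zero_of_comp_eq_zero (hS : IsFirstOrder S) (hT : IsFirstOrder T)
    (hT_add : ∀ x y, T (x + y) = T x + T y) (hTS : ∀ x, T (S x) = 0) (x y : A) :
    principalSymbol S x * principalSymbol T y + principalSymbol S y * principalSymbol T x = 0 := by
  have hS_mul : S (x * y) + S 1 * (x * y) = S x * y + S y * x := by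
    rw [hS.map_mul, principalSymbol_apply]
    ring
  have hT_mul : S 1 * principalSymbol T (x * y) =
      S x * principalSymbol T y + S y * principalSymbol T x := by
    simpa only [hT_add, hTS, zero_add, hT.map_mul_of_map_eq_zero (hTS _)] using congrArg T hS_mul
  rw [hT.principalSymbol_mul] at hT_mul
  rw [principalSymbol_apply S, principalSymbol_apply S]
  linear_combination -hT_mul

theorem mul_eq_zero_of_mul_add_mul_eq_zero {ι : Type*} [IsReduced A]
    (h2 : (2 : A) ∈ nonZeroDivisors A) {p q : ι → A}
    (hpq : ∀ i j, p i * q j + p j * q i = 0) (i j : ι) : p i * q j = 0 := by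
  have hdiag : p i * q i = 0 := by
    rw [← mul_left_mem_nonZeroDivisors_eq_zero_iff h2, two_mul, hpq]
  refine eq_zero_of_pow_eq_zero (n := 2) ?_
  linear_combination p i * q j * hpq i j - p j * q j * hdiag

theorem principalSymbol_mul_eq_zero_of_comp_eq_zero [IsReduced A]
    (h2 : (2 : A) ∈ nonZeroDivisors A) (hS : IsFirstOrder S) (hT : IsFirstOrder T)
    (hT_add : ∀ x y, T (x + y) = T x + T y) (hTS : ∀ x, T (S x) = 0) (x y : A) :
    principalSymbol S x * principalSymbol T y = 0 :=
  mul_eq_zero_of_mul_add_mul_eq_zero h2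
    (principalSymbol_mul_add_eq_zero_of_comp_eq_zero hS hT hT_add hTS) x y

end Operators

/-- The symmetrization `B(x, y) + B(y, x)`, which measures the failure of a bracket to be
antisymmetric. -/
def symmetrization {A : Type*} [Add A] (B : A → A → A) (x y : A) : A :=
  B x y + B y x

theorem symmetrization_comm {A : Type*} [AddCommMagma A] (B : A → A → A) (x y : A) :
    symmetrization B x y = symmetrization B y x :=
  add_comm _ _

theorem IsFirstOrder.symmetrization {A : Type*} [NonUnitalNonAssocRing A] {B : A → A → A} {y : A}
    (hleft : IsFirstOrder (B · y)) (hright : IsFirstOrder (B y)) :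
    IsFirstOrder (symmetrization B · y) :=
  hleft.add hright

/-- Left Loday brackets: `B x` acts as a derivation of `B`. Additivity is imposed in the first
argument only. -/
structure IsLodayBracket_s12 {A : Type*} [Add A] (B : A → A → A) : Prop where
  add_left : ∀ x y z, B (x + y) z = B x z + B y z
  jacobi : ∀ x y z, B x (B y z) = B (B x y) z + B y (B x z)

namespace IsLodayBracket_s12

section AddCommGroup

variable {A : Type*} [AddCommGroup A] {B : A → A → A}

theorem apply_self_left (hB : IsLodayBracket_s12 B) (x z : A) : B (B x x) z = 0 :=
  right_eq_add.mp (hB.jacobi x x z)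

theorem symmetrization_left (hB : IsLodayBracket_s12 B) (x y z : A) :
    B (symmetrization B x y) z = 0 := by
  have h := hB.jacobi x y z
  rw [hB.jacobi y x z, ← add_assoc] at h
  rw [symmetrization, hB.add_left]
  exact right_eq_add.mp h

end AddCommGroup

variable {A : Type*} [CommRing A] [IsReduced A] {B : A → A → A}

theorem mul_apply_eq_zero_of_mul_principalSymbol_eq_zero (hB : IsLodayBracket_s12 B) {s : A}
    (hs : ∀ x z, s * principalSymbol (B · z) x = 0) (x z : A) : s * B x z = 0 := by
  have hfactor (x z : A) : s * B x z = s * (x * B 1 z) := by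
    have h := hs x z
    rw [principalSymbol_apply] at h
    linear_combination h
  have hone_one : s * B 1 1 = 0 := by
    refine eq_zero_of_pow_eq_zero (n := 2) ?_
    linear_combination s * s * hB.apply_self_left 1 1 - s * hfactor (B 1 1) 1
  have hone (v : A) : s * B 1 v = 0 := by
    have hsymm : s * symmetrization B 1 v = s * B 1 v := by
      rw [symmetrization]
      linear_combination hfactor v 1 + v * hone_one
    refine eq_zero_of_pow_eq_zero (n := 2) ?_
    linear_combination s * s * hB.symmetrization_left 1 v v
      - s * hfactor (symmetrization B 1 v) v - s * B 1 v * hsymm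
  linear_combination hfactor x z + x * hone z

theorem principalSymbol_symmetrization_eq_zero (hB : IsLodayBracket_s12 B)
    (h2 : (2 : A) ∈ nonZeroDivisors A) (hleft : ∀ z, IsFirstOrder (B · z))
    (hright : ∀ x, IsFirstOrder (B x)) (x y : A) :
    principalSymbol (symmetrization B · y) x = 0 := by
  set s := principalSymbol (symmetrization B · y) x with hs
  have hs_symbol (u z : A) : s * principalSymbol (B · z) u = 0 :=
    principalSymbol_mul_eq_zero_of_comp_eq_zero h2 ((hleft y).symmetrization (hright y)) (hleft z)
      (fun a b => hB.add_left a b z) (fun a => hB.symmetrization_left a y z) x u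
  have hs_apply := hB.mul_apply_eq_zero_of_mul_principalSymbol_eq_zero hs_symbol
  rw [principalSymbol_apply, symmetrization, symmetrization] at hs
  refine eq_zero_of_pow_eq_zero (n := 2) ?_
  linear_combination s * hs + hs_apply x y + hs_apply y x - x * (hs_apply 1 y + hs_apply y 1)

theorem symmetrization_eq_mul (hB : IsLodayBracket_s12 B)
    (h2 : (2 : A) ∈ nonZeroDivisors A) (hleft : ∀ z, IsFirstOrder (B · z))
    (hright : ∀ x, IsFirstOrder (B x)) (x y : A) :
    symmetrization B x y = x * y * (2 * B 1 1) := by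
  have hsymm (u v : A) : symmetrization B u v = u * symmetrization B 1 v := by
    rw [← sub_eq_zero, ← principalSymbol_apply (symmetrization B · v)]
    exact hB.principalSymbol_symmetrization_eq_zero h2 hleft hright u v
  rw [hsymm, symmetrization_comm, hsymm, symmetrization]
  ring

theorem apply_one_one (hB : IsLodayBracket_s12 B)
    (h2 : (2 : A) ∈ nonZeroDivisors A) (hleft : ∀ z, IsFirstOrder (B · z))
    (hright : ∀ x, IsFirstOrder (B x)) : B 1 1 = 0 := by
  have hsymbol (x z : A) : B 1 1 * principalSymbol (B · z) x = 0 := by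
    rw [← mul_left_mem_nonZeroDivisors_eq_zero_iff h2]
    calc 2 * (B 1 1 * principalSymbol (B · z) x)
        = 2 * B (B 1 1 * x) z := by
          rw [(hleft z).map_mul_of_map_eq_zero (hB.apply_self_left 1 z)]
      _ = B (B 1 1 * x + B 1 1 * x) z := by rw [hB.add_left, two_mul]
      _ = B (symmetrization B x 1) z := by
          rw [hB.symmetrization_eq_mul h2 hleft hright]
          congr 1
          ring
      _ = 0 := hB.symmetrization_left x 1 z
  refine eq_zero_of_pow_eq_zero (n := 2) ?_
  rw [sq, hB.mul_apply_eq_zero_of_mul_principalSymbol_eq_zero hsymbol]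

end IsLodayBracket_s12

theorem first_order_loday_bracket_square_right_zero_general {A : Type*} [CommRing A] [IsReduced A]
    (h2 : (2 : A) ∈ nonZeroDivisors A) {B : A → A → A} (hB : IsLodayBracket_s12 B)
    (hleft : ∀ z, IsFirstOrder (B · z)) (hright : ∀ x, IsFirstOrder (B x)) (x : A) :
    B x x = 0 := by
  rw [← mul_left_mem_nonZeroDivisors_eq_zero_iff h2, two_mul]
  calc symmetrization B x x = x * x * (2 * B 1 1) := hB.symmetrization_eq_mul h2 hleft hright x x
    _ = 0 := by rw [hB.apply_one_one h2 hleft hright, mul_zero, mul_zero]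

/-- For a first-order Loday bracket on a reduced commutative unital algebra
over a field of characteristic zero, `B(z, B(x,x)) = 0`. -/
theorem first_order_loday_bracket_square_right_zero
    {k : Type*} [Field k] [CharZero k]
    {A : Type*} [CommRing A] [Algebra k A] [IsReduced A]
    (B : A → A → A)
    (haddl : ∀ a b c : A, B (a + b) c = B a c + B b c)
    (haddr : ∀ a b c : A, B a (b + c) = B a b + B a c)
    (hsmull : ∀ (t : k) (a b : A), B (t • a) b = t • B a b)
    (hsmulr : ∀ (t : k) (a b : A), B a (t • b) = t • B a b)
    (horder : ∀ u v x : A,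
      delta u (delta v (fun y => B x y)) = 0 ∧
      delta u (delta v (fun y => B y x)) = 0)
    (hjacobi : ∀ x y z : A, B x (B y z) = B (B x y) z + B y (B x z)) :
    ∀ x z : A, B z (B x x) = 0 := by
  intro x z
  have h2 : (2 : A) ∈ nonZeroDivisors A := by
    have h := (IsUnit.mk0 (2 : k) two_ne_zero).map (algebraMap k A)
    rw [map_ofNat] at h
    exact h.mem_nonZeroDivisors
  have hleft (y : A) : IsFirstOrder (B · y) := fun u v => (horder u v y).2
  have hright (y : A) : IsFirstOrder (B y) := fun u v => (horder u v y).1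
  rw [first_order_loday_bracket_square_right_zero_general h2 ⟨haddl, hjacobi⟩ hleft hright x]
  exact (hright z).map_zero
end
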